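/- For all q+1 ≤ j ≤ n and 1 ≤ k ≤ q, the fourth Wirtinger derivative of ψ in the z-variables satisfies ∂^4ψ/∂z̄_j∂z_j∂z̄_k∂z_k(0,0) = Σ_{t=1}^q [ 2i|λ_j|/((|λ_j|+|λ_k|)(|λ_t|+|λ_j|)) |∂^3φ/∂z̄_t∂z_j∂z_k(0)|^2 + 2i|λ_t||λ_k||λ_j|/((|λ_j|+|λ_k|)(|λ_t|+|λ_k|+|λ_j|)^2) · (1/(|λ_j|+|λ_t|) + 1/(|λ_j|+|λ_k|)) |∂^3φ/∂z̄_t∂z_j∂z̄_k(0)|^2 + 2i|λ_j|/((|λ_j|+|λ_t|)(|λ_j|+|λ_k|)) (∂^3φ/∂z_t∂z̄_j∂z_j(0))(∂^3φ/∂z̄_t∂z̄_k∂z_k(0)) ] + Σ_{t=q+1}^n [ 2i|λ_k|/((|λ_j|+|λ_k|)(|λ_t|+|λ_k|)) |∂^3φ/∂z̄_t∂z_j∂z_k(0)|^2 + 2i|λ_t||λ_k||λ_j|/((|λ_j|+|λ_k|)(|λ_t|+|λ_k|+|λ_j|)^2) · (1/(|λ_j|+|λ_k|) + 1/(|λ_t|+|λ_k|))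 |∂^3φ/∂z̄_t∂z̄_j∂z_k(0)|^2 + 2i|λ_k|/((|λ_k|+|λ_t|)(|λ_j|+|λ_k|)) (∂^3φ/∂z_t∂z̄_j∂z_j(0))(∂^3φ/∂z̄_t∂z̄_k∂z_k(0)) ] + i (λ_j+λ_k)/(|λ_j|+|λ_k|) ∂^4φ/∂z̄_j∂z_j∂z̄_k∂z_k(0), where all derivatives of ψ are taken in the z-variables (w held fixed) and evaluated at (z,w) = (0,0). -/

import Mathlib

open Complex Asymptotics

attribute [local instance] Classical.propDecidable

noncomputable section

/-- `ℂⁿ` as `Fin n → ℂ`. -/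
abbrev Cn (n : ℕ) := Fin n → ℂ

/-- Wirtinger derivative `∂/∂z_j = (1/2)(∂/∂x_{2j-1} − i ∂/∂x_{2j})`. -/
def wd {n : ℕ} (j : Fin n) (f : Cn n → ℂ) : Cn n → ℂ := fun z =>
  (1 / 2 : ℂ) *
    (fderiv ℝ f z (Pi.single j 1) - Complex.I * fderiv ℝ f z (Pi.single j Complex.I))

/-- Wirtinger derivative `∂/∂z̄_j = (1/2)(∂/∂x_{2j-1} + i ∂/∂x_{2j})`. -/
def wdb {n : ℕ} (j : Fin n) (f : Cn n → ℂ) : Cn n → ℂ := fun z =>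
  (1 / 2 : ℂ) *
    (fderiv ℝ f z (Pi.single j 1) + Complex.I * fderiv ℝ f z (Pi.single j Complex.I))

/-- A real-valued function regarded as complex-valued. -/
def cplx {n : ℕ} (φ : Cn n → ℝ) : Cn n → ℂ := fun z => (φ z : ℂ)

/-- `φ` is smooth and `φ(z) = Σ_j λ_j |z_j|² + O(|z|³)` as `z → 0`. -/
def PhiOK {n : ℕ} (lam : Fin n → ℝ) (φ : Cn n → ℝ) : Prop :=
  ContDiff ℝ (⊤ : ℕ∞) φ ∧
    (fun z : Cn n => φ z - ∑ j, lam j * Complex.normSq (z j)) =O[nhds 0] fun z => ‖z‖ ^ 3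

/-- The conditions (a)–(e) on the phase function `ψ`. -/
def Admissible {n : ℕ} (lam : Fin n → ℝ) (φ : Cn n → ℝ) (ψ : Cn n → Cn n → ℂ) : Prop :=
  ContDiff ℝ (⊤ : ℕ∞) (fun p : Cn n × Cn n => ψ p.1 p.2) ∧
  -- (a)
  (∀ z, ψ z z = 0) ∧
  (∀ z w, ψ z w = - (starRingEnd ℂ) (ψ w z)) ∧
  -- (b)
  (∃ c : ℝ, 0 < c ∧ ∀ z w, c * ‖z - w‖ ^ 2 ≤ (ψ z w).im) ∧
  -- (c): on the diagonal, ∂ψ/∂z̄_j = i ∂φ/∂z̄_j, ∂ψ/∂z_j = −i ∂φ/∂z_j,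
  --      ∂ψ/∂w̄_j = −i ∂φ/∂z̄_j, ∂ψ/∂w_j = i ∂φ/∂z_j
  (∀ (z : Cn n) (j : Fin n), wdb j (fun x => ψ x z) z = Complex.I * wdb j (cplx φ) z) ∧
  (∀ (z : Cn n) (j : Fin n), wd j (fun x => ψ x z) z = - Complex.I * wd j (cplx φ) z) ∧
  (∀ (z : Cn n) (j : Fin n), wdb j (fun w => ψ z w) z = - Complex.I * wdb j (cplx φ) z) ∧
  (∀ (z : Cn n) (j : Fin n), wd j (fun w => ψ z w) z = Complex.I * wd j (cplx φ) z) ∧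
  -- (d): Σ_j (i ∂ψ/∂z̄_j + ∂φ/∂z̄_j)(−i ∂ψ/∂z_j + ∂φ/∂z_j) vanishes to infinite
  --      order on the diagonal
  (∀ (m : ℕ) (z : Cn n),
    iteratedFDeriv ℝ m
      (fun p : Cn n × Cn n =>
        ∑ j, (Complex.I * wdb j (fun x => ψ x p.2) p.1 + wdb j (cplx φ) p.1) *
             (- Complex.I * wd j (fun x => ψ x p.2) p.1 + wd j (cplx φ) p.1))
      (z, z) = 0) ∧
  -- (e)
  ((fun p : Cn n × Cn n =>
      ψ p.1 p.2 -
        (Complex.I * ∑ j, ((|lam j| * Complex.normSq (p.1 j - p.2 j) : ℝ) : ℂ)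
          + Complex.I * ∑ j, ((lam j : ℝ) : ℂ) *
              ((starRingEnd ℂ) (p.1 j) * p.2 j - (starRingEnd ℂ) (p.2 j) * p.1 j)))
    =O[nhds 0] fun p => ‖p‖ ^ 3)

open scoped ContDiff

lemma two_le_inf : (2 : WithTop ℕ∞) ≤ ∞ := by
  change ((2 : ℕ∞) : WithTop ℕ∞) ≤ _
  exact WithTop.coe_le_coe.2 le_top

lemma two_le_inf' : (1 + 1 : WithTop ℕ∞) ≤ ∞ := by
  rw [one_add_one_eq_two]; exact two_le_inf

/-- smooth functions -/
def Sm (n : ℕ) : Subalgebra ℂ (Cn n × Cn n → ℂ) where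
  carrier := {f | ContDiff ℝ ∞ f}
  mul_mem' := fun {a b} (ha : ContDiff ℝ ∞ a) (hb : ContDiff ℝ ∞ b) => (ha.mul hb : ContDiff ℝ ∞ (a * b))
  add_mem' := fun {a b} (ha : ContDiff ℝ ∞ a) (hb : ContDiff ℝ ∞ b) => (ha.add hb : ContDiff ℝ ∞ (a + b))
  algebraMap_mem' := fun r => (contDiff_const : ContDiff ℝ ∞ (fun _ : Cn n × Cn n => r))

lemma Smcd {n : ℕ} (f : Sm n) : ContDiff ℝ ∞ (f : Cn n × Cn n → ℂ) := f.2

lemma Smdiff {n : ℕ} (f : Sm n) : Differentiable ℝ (f : Cn n × Cn n → ℂ) :=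
  (Smcd f).differentiable (by simp)

def dR {n : ℕ} (v : Cn n × Cn n) : Derivation ℂ (Sm n) (Sm n) where
  toFun f := ⟨fun p => fderiv ℝ (f : Cn n × Cn n → ℂ) p v, by
    exact ((Smcd f).fderiv_right (m := ∞) (by simp)).clm_apply contDiff_const⟩
  map_add' f g := by
    ext p
    have := fderiv_add (𝕜 := ℝ) (Smdiff f p) (Smdiff g p)
    change fderiv ℝ ((f : Cn n × Cn n → ℂ) + (g : Cn n × Cn n → ℂ)) p v = _
    rw [this]; rfl
  map_smul' c f := by
    ext p
    have := fderiv_const_smul (𝕜 := ℝ) (Smdiff f p) c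
    change fderiv ℝ (c • (f : Cn n × Cn n → ℂ)) p v = _
    rw [this]; rfl
  map_one_eq_zero' := by
    ext p
    change fderiv ℝ (fun _ => (1:ℂ)) p v = 0
    simp
  leibniz' f g := by
    ext p
    have := fderiv_mul (𝕜 := ℝ) (Smdiff f p) (Smdiff g p)
    change fderiv ℝ ((f : Cn n × Cn n → ℂ) * (g : Cn n × Cn n → ℂ)) p v = _
    rw [this]; rfl

lemma dR_apply {n : ℕ} (v : Cn n × Cn n) (f : Sm n) (p) :
    (dR v f : Cn n × Cn n → ℂ) p = fderiv ℝ (f : Cn n × Cn n → ℂ) p v := rfl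

lemma dR_comm {n : ℕ} (v w : Cn n × Cn n) (f : Sm n) : dR v (dR w f) = dR w (dR v f) := by
  ext p
  have hs : IsSymmSndFDerivAt ℝ (f : Cn n × Cn n → ℂ) p :=
    ((Smcd f).contDiffAt).isSymmSndFDerivAt (by
      simp only [minSmoothness_of_isRCLikeNormedField]; exact two_le_inf)
  have hd : DifferentiableAt ℝ (fderiv ℝ (f : Cn n × Cn n → ℂ)) p :=
    (((Smcd f).fderiv_right (m := 1) two_le_inf').differentiable (by simp)) p
  have key : ∀ v w, (dR v (dR w f) : Cn n × Cn n → ℂ) p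
      = fderiv ℝ (fderiv ℝ (f : Cn n × Cn n → ℂ)) p v w := by
    intro v w
    change fderiv ℝ (fun p => fderiv ℝ (f : Cn n × Cn n → ℂ) p w) p v = _
    rw [fderiv_clm_apply hd (by fun_prop)]
    simp
  rw [key, key, hs.eq]

/-- variable sign -/
def sg (b : Bool) : ℂ := if b then 1 else -1

def inj {n : ℕ} (l : Bool) (v : Cn n) : Cn n × Cn n := if l then (0, v) else (v, 0)

/-- `l = false`: z variable, `l = true`: w variable; `x.1 = true`: barred. -/
def D {n : ℕ} (l : Bool) (x : Bool × Fin n) : Derivation ℂ (Sm n) (Sm n) :=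
  (1 / 2 : ℂ) • (dR (inj l (Pi.single x.2 1)) + (sg x.1 * I) • dR (inj l (Pi.single x.2 I)))

lemma D_comm {n : ℕ} (l m : Bool) (x y : Bool × Fin n) (f : Sm n) :
    D l x (D m y f) = D m y (D l x f) := by
  simp only [D, Derivation.smul_apply, Derivation.add_apply, Derivation.map_smul, map_add, smul_add]
  rw [dR_comm (inj l (Pi.single x.2 1)) (inj m (Pi.single y.2 1)),
    dR_comm (inj l (Pi.single x.2 1)) (inj m (Pi.single y.2 I)),
    dR_comm (inj l (Pi.single x.2 I)) (inj m (Pi.single y.2 1)),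
    dR_comm (inj l (Pi.single x.2 I)) (inj m (Pi.single y.2 I))]
  module

lemma D_apply {n : ℕ} (l : Bool) (x : Bool × Fin n) (f : Sm n) (p) :
    (D l x f : Cn n × Cn n → ℂ) p = (1 / 2 : ℂ) *
      (fderiv ℝ (f : Cn n × Cn n → ℂ) p (inj l (Pi.single x.2 1)) + (sg x.1 * I) *
        fderiv ℝ (f : Cn n × Cn n → ℂ) p (inj l (Pi.single x.2 I))) := rfl

/-- one-variable Wirtinger derivative -/
def W {n : ℕ} (x : Bool × Fin n) (f : Cn n → ℂ) : Cn n → ℂ :=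
  if x.1 then wdb x.2 f else wd x.2 f

lemma W_apply {n : ℕ} (x : Bool × Fin n) (f : Cn n → ℂ) (z) : W x f z = (1 / 2 : ℂ) *
      (fderiv ℝ f z (Pi.single x.2 1) + (sg x.1 * I) * fderiv ℝ f z (Pi.single x.2 I)) := by
  obtain ⟨b, j⟩ := x
  cases b <;> simp [W, wd, wdb, sg]
  ring

lemma W_z {n : ℕ} (x : Bool × Fin n) (f : Sm n) (w : Cn n) :
    W x (fun z => (f : Cn n × Cn n → ℂ) (z, w)) = fun z => (D false x f : Cn n × Cn n → ℂ) (z, w) := by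
  ext z
  have h : HasFDerivAt (fun z => (f : Cn n × Cn n → ℂ) (z, w))
      ((fderiv ℝ (f : Cn n × Cn n → ℂ) (z, w)).comp (ContinuousLinearMap.inl ℝ _ _)) z :=
    ((Smdiff f (z, w)).hasFDerivAt).comp z (hasFDerivAt_prodMk_left z w)
  rw [W_apply, D_apply, h.fderiv]
  simp [inj]

lemma W_diag {n : ℕ} (x : Bool × Fin n) (f : Sm n) :
    W x (fun z => (f : Cn n × Cn n → ℂ) (z, z)) = fun z =>
      (D false x f : Cn n × Cn n → ℂ) (z, z) + (D true x f : Cn n × Cn n → ℂ) (z, z) := by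
  ext z
  have h : HasFDerivAt (fun z => (f : Cn n × Cn n → ℂ) (z, z))
      ((fderiv ℝ (f : Cn n × Cn n → ℂ) (z, z)).comp
        ((ContinuousLinearMap.id ℝ _).prod (ContinuousLinearMap.id ℝ _))) z :=
    ((Smdiff f (z, z)).hasFDerivAt).comp (f := fun z => (z, z)) z
      ((hasFDerivAt_id z).prodMk (hasFDerivAt_id z))
  rw [W_apply, D_apply, D_apply, h.fderiv]
  have e : ∀ v : Cn n, (v, v) = inj false v + inj true v := by intro v; simp [inj]
  simp only [ContinuousLinearMap.comp_apply, ContinuousLinearMap.prod_apply,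
    ContinuousLinearMap.id_apply, e, map_add]
  ring

lemma D_diag {n : ℕ} (x : Bool × Fin n) (f : Sm n)
    (h : ∀ z, (f : Cn n × Cn n → ℂ) (z, z) = 0) (z : Cn n) :
    ((D false x f + D true x f : Sm n) : Cn n × Cn n → ℂ) (z, z) = 0 := by
  have := congrFun (W_diag x f) z
  rw [funext h] at this
  rw [W_apply] at this
  simp at this
  simp [this]

/-- flipping the bar -/
def br {n : ℕ} (x : Bool × Fin n) : Bool × Fin n := (!x.1, x.2)

def kap {n : ℕ} (f : Sm n) : Sm n := ⟨fun p => (starRingEnd ℂ) ((f : Cn n × Cn n → ℂ) p),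
  Complex.conjCLE.contDiff.comp (Smcd f)⟩

def swp {n : ℕ} (f : Sm n) : Sm n := ⟨fun p => (f : Cn n × Cn n → ℂ) p.swap,
  (Smcd f).comp (contDiff_snd.prodMk contDiff_fst)⟩

lemma D_kap {n : ℕ} (l : Bool) (x : Bool × Fin n) (f : Sm n) :
    D l x (kap f) = kap (D l (br x) f) := by
  ext p
  have h : HasFDerivAt (kap f : Cn n × Cn n → ℂ)
      ((Complex.conjCLE : ℂ →L[ℝ] ℂ).comp (fderiv ℝ (f : Cn n × Cn n → ℂ) p)) p :=
    (Complex.conjCLE : ℂ →L[ℝ] ℂ).hasFDerivAt.comp p (Smdiff f p).hasFDerivAt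
  change _ = (starRingEnd ℂ) ((D l (br x) f : Cn n × Cn n → ℂ) p)
  rw [D_apply, D_apply, h.fderiv]
  obtain ⟨b, j⟩ := x
  cases b <;> simp [sg, br] <;> left <;> exact (Complex.conj_ofNat 2).symm

lemma D_swp {n : ℕ} (l : Bool) (x : Bool × Fin n) (f : Sm n) :
    D l x (swp f) = swp (D (!l) x f) := by
  ext p
  have h : HasFDerivAt (swp f : Cn n × Cn n → ℂ)
      ((fderiv ℝ (f : Cn n × Cn n → ℂ) p.swap).comp
        ((ContinuousLinearMap.snd ℝ _ _).prod (ContinuousLinearMap.fst ℝ _ _))) p :=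
    ((Smdiff f p.swap).hasFDerivAt).comp (f := Prod.swap) p
      (hasFDerivAt_snd.prodMk hasFDerivAt_fst)
  change _ = ((D (!l) x f : Cn n × Cn n → ℂ) p.swap)
  rw [D_apply, D_apply, h.fderiv]
  cases l <;> simp [inj]

def Flat {n : ℕ} (f : Cn n × Cn n → ℂ) : Prop := ∀ m, iteratedFDeriv ℝ m f 0 = 0

lemma Flat.dR {n : ℕ} (f : Sm n) (h : Flat (f : Cn n × Cn n → ℂ)) (v) :
    Flat (dR v f : Cn n × Cn n → ℂ) := by
  intro m
  have h1 : iteratedFDeriv ℝ m (fderiv ℝ (f : Cn n × Cn n → ℂ)) 0 = 0 := by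
    have := h (m + 1)
    rw [iteratedFDeriv_succ_eq_comp_right] at this
    exact (LinearIsometryEquiv.map_eq_zero_iff _).1 this
  have hc : ContDiffAt ℝ m (fderiv ℝ (f : Cn n × Cn n → ℂ)) 0 :=
    ((Smcd f).fderiv_right (m := m) (by exact_mod_cast le_top)).contDiffAt
  have := (ContinuousLinearMap.apply ℝ ℂ v).iteratedFDeriv_comp_left hc le_rfl
  change iteratedFDeriv ℝ m ((ContinuousLinearMap.apply ℝ ℂ v) ∘
    (fderiv ℝ (f : Cn n × Cn n → ℂ))) 0 = 0
  rw [this, h1]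
  ext; simp

lemma Flat.D {n : ℕ} (f : Sm n) (h : Flat (f : Cn n × Cn n → ℂ)) (l x) :
    Flat (D l x f : Cn n × Cn n → ℂ) := by
  intro m
  have h1 := Flat.dR f h (inj l (Pi.single x.2 1)) m
  have h2 := Flat.dR f h (inj l (Pi.single x.2 I)) m
  have c1 : ContDiffAt ℝ m (_root_.dR (inj l (Pi.single x.2 1)) f : Cn n × Cn n → ℂ) 0 :=
    ((Smcd (_root_.dR _ f)).of_le (by exact_mod_cast le_top)).contDiffAt
  have c2 : ContDiffAt ℝ m (_root_.dR (inj l (Pi.single x.2 I)) f : Cn n × Cn n → ℂ) 0 :=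
    ((Smcd (_root_.dR _ f)).of_le (by exact_mod_cast le_top)).contDiffAt
  change iteratedFDeriv ℝ m ((1 / 2 : ℂ) • ((_root_.dR (inj l (Pi.single x.2 1)) f : Cn n × Cn n → ℂ) +
    (sg x.1 * I) • (_root_.dR (inj l (Pi.single x.2 I)) f : Cn n × Cn n → ℂ))) 0 = 0
  have c3 : ContDiffAt ℝ m ((sg x.1 * I) • (_root_.dR (inj l (Pi.single x.2 I)) f : Cn n × Cn n → ℂ)) 0 :=
    c2.const_smul (sg x.1 * I)
  have c4 : ContDiffAt ℝ m ((_root_.dR (inj l (Pi.single x.2 1)) f : Cn n × Cn n → ℂ) +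
    (sg x.1 * I) • (_root_.dR (inj l (Pi.single x.2 I)) f : Cn n × Cn n → ℂ)) 0 := c1.add c3
  rw [iteratedFDeriv_const_smul_apply c4, iteratedFDeriv_add_apply c1 c3,
    iteratedFDeriv_const_smul_apply c2, h1, h2]
  simp

def ev {n : ℕ} : Sm n →ₐ[ℂ] ℂ where
  toFun f := (f : Cn n × Cn n → ℂ) 0
  map_one' := rfl
  map_mul' _ _ := rfl
  map_zero' := rfl
  map_add' _ _ := rfl
  commutes' _ := rfl

lemma Flat.ev {n : ℕ} (f : Sm n) (h : Flat (f : Cn n × Cn n → ℂ)) : ev f = 0 := by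
  have := congrArg (fun g => g (0 : Fin 0 → Cn n × Cn n)) (h 0)
  simp at this
  exact this


lemma oneD (h : ℝ → ℂ) (hc : ContDiff ℝ 2 h) (hO : h =O[nhds 0] fun t => t ^ 3) :
    deriv h 0 = 0 ∧ deriv (deriv h) 0 = 0 := by
  have h2 : h =O[nhds 0] fun t => ‖t - 0‖ ^ 3 := by
    refine hO.trans (IsBigO.of_bound 1 ?_)
    filter_upwards with t; simp
  have h0 : h 0 = 0 := h2.eq_zero_of_norm_pow (by norm_num : (3 : ℕ) ≠ 0)
  have h1 : deriv h 0 = 0 := by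
    have := h2.hasFDerivAt (𝕜 := ℝ) (by norm_num)
    have h3 := this.hasDerivAt.deriv
    simpa using h3
  refine ⟨h1, ?_⟩
  have ht := taylor_isLittleO_univ (x₀ := 0) hc
  have hev : ∀ t, taylorWithinEval h 2 Set.univ 0 t = (t ^ 2 : ℝ) • ((1 / 2 : ℝ) • deriv (deriv h) 0) := by
    intro t
    rw [taylorWithinEval_succ, taylorWithinEval_succ, taylor_within_zero_eval, h0,
      iteratedDerivWithin_univ, iteratedDerivWithin_univ, zero_add, iteratedDeriv_one, h1]
    have : iteratedDeriv (1+1) h = deriv (deriv h) := by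
      rw [iteratedDeriv_succ, iteratedDeriv_one]
    rw [this, smul_zero, zero_add, smul_smul]
    congr 1
    norm_num [Nat.factorial]
    ring
  have hO2 : h =o[nhds 0] fun t : ℝ => (t - 0) ^ 2 := by
    refine hO.trans_isLittleO ?_
    simp only [sub_zero]
    exact isLittleO_pow_pow (by norm_num)
  have h5 := hO2.sub ht
  have h6 : (fun t : ℝ => (t ^ 2 : ℝ) • ((1 / 2 : ℝ) • deriv (deriv h) 0)) =o[nhds 0]
      fun t : ℝ => t ^ 2 := by
    refine h5.congr (fun t => ?_) (fun t => by simp)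
    rw [hev]; ring
  have h7 := ((h6.norm_left).mono (nhdsWithin_le_nhds (s := {0}ᶜ))).tendsto_div_nhds_zero
  have h8 : Filter.Tendsto (fun t : ℝ => ‖(t ^ 2 : ℝ) • ((1 / 2 : ℝ) • deriv (deriv h) 0)‖ / t ^ 2)
      (nhdsWithin 0 {0}ᶜ) (nhds ‖(1 / 2 : ℝ) • deriv (deriv h) 0‖) := by
    refine (tendsto_const_nhds).congr' ?_
    filter_upwards [self_mem_nhdsWithin] with t ht
    have ht' : t ^ 2 ≠ 0 := pow_ne_zero _ ht
    rw [norm_smul (t ^ 2), Real.norm_of_nonneg (sq_nonneg t), mul_div_cancel_left₀ _ ht']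
  have := tendsto_nhds_unique h8 h7
  simpa using this

lemma dir_O {n : ℕ} (g : Sm n)
    (hO : (fun z => (g : Cn n × Cn n → ℂ) (z, 0)) =O[nhds 0] fun z => ‖z‖ ^ 3) (v : Cn n) :
    ev (dR (v, 0) g) = 0 ∧ ev (dR (v, 0) (dR (v, 0) g)) = 0 := by
  have hd : ∀ (f : Sm n) (t : ℝ), HasDerivAt (fun t : ℝ => (f : Cn n × Cn n → ℂ) (t • v, 0))
      ((dR (v, 0) f : Cn n × Cn n → ℂ) (t • v, 0)) t := by
    intro f t
    have h1 : HasDerivAt (fun t : ℝ => ((t • v, 0) : Cn n × Cn n)) (v, 0) t := by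
      have := (hasDerivAt_id t).smul_const v
      simp only [one_smul] at this
      exact this.prodMk (hasDerivAt_const t 0)
    exact (Smdiff f (t • v, 0)).hasFDerivAt.comp_hasDerivAt t h1
  have hc : ContDiff ℝ 2 (fun t : ℝ => (g : Cn n × Cn n → ℂ) (t • v, 0)) :=
    ((Smcd g).of_le two_le_inf).comp ((contDiff_id.smul contDiff_const).prodMk contDiff_const)
  have hv : (fun t : ℝ => (g : Cn n × Cn n → ℂ) (t • v, 0)) =O[nhds 0] fun t => t ^ 3 := by
    have ht : Filter.Tendsto (fun t : ℝ => t • v) (nhds 0) (nhds 0) := by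
      have : Continuous (fun t : ℝ => t • v) := by fun_prop
      have := this.tendsto 0
      simpa using this
    refine (hO.comp_tendsto ht).trans (IsBigO.of_bound (‖v‖ ^ 3) ?_)
    filter_upwards with t
    simp [norm_smul, mul_pow]
    rw [mul_comm]
  have := oneD _ hc hv
  have e1 : deriv (fun t : ℝ => (g : Cn n × Cn n → ℂ) (t • v, 0)) =
    fun t => ((dR (v, 0) g : Cn n × Cn n → ℂ) (t • v, 0)) := funext fun t => (hd g t).deriv
  rw [e1, (hd _ 0).deriv, zero_smul] at this
  simp only [zero_smul] at this
  exact this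

lemma dR_add {n : ℕ} (v w : Cn n × Cn n) (f : Sm n) : dR (v + w) f = dR v f + dR w f := by
  ext p
  exact map_add (fderiv ℝ (f : Cn n × Cn n → ℂ) p) v w

lemma dir_O2 {n : ℕ} (g : Sm n)
    (hO : (fun z => (g : Cn n × Cn n → ℂ) (z, 0)) =O[nhds 0] fun z => ‖z‖ ^ 3) (v w : Cn n) :
    ev (dR (v, 0) (dR (w, 0) g)) = 0 := by
  have h := (dir_O g hO (v + w)).2
  have e : ((v + w, 0) : Cn n × Cn n) = (v, 0) + (w, 0) := by simp
  rw [e] at h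
  simp only [dR_add, map_add] at h
  rw [(dir_O g hO v).2, (dir_O g hO w).2, dR_comm (w, 0) (v, 0)] at h
  have : 2 * ev (dR (v, 0) (dR (w, 0) g)) = 0 := by linear_combination h
  simpa using this

lemma D_O {n : ℕ} (g : Sm n)
    (hO : (fun z => (g : Cn n × Cn n → ℂ) (z, 0)) =O[nhds 0] fun z => ‖z‖ ^ 3)
    (x y : Bool × Fin n) :
    ev (D false x g) = 0 ∧ ev (D false y (D false x g)) = 0 := by
  constructor
  · simp [D, inj, dir_O g hO]
  · simp only [D, inj, Bool.false_eq_true, if_false, Derivation.smul_apply, Derivation.add_apply,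
      Derivation.map_smul, map_add, map_smul, dir_O2 g hO]
    simp

/-- coordinates -/
def co {n : ℕ} (x : Bool × Fin n) : Sm n :=
  ⟨fun p => if x.1 then (starRingEnd ℂ) (p.1 x.2) else p.1 x.2, by
    have h : ContDiff ℝ ∞ (fun p : Cn n × Cn n => p.1 x.2) := by fun_prop
    obtain ⟨b, j⟩ := x
    cases b
    · exact h
    · exact Complex.conjCLE.contDiff.comp h⟩

lemma D_co {n : ℕ} (x y : Bool × Fin n) :
    D false y (co x) = if x = y then 1 else 0 := by
  obtain ⟨b, j⟩ := x
  obtain ⟨c, k⟩ := y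
  ext p
  have h : HasFDerivAt (fun p : Cn n × Cn n => p.1 j)
      ((ContinuousLinearMap.proj j).comp (ContinuousLinearMap.fst ℝ (Cn n) (Cn n))) p :=
    ((ContinuousLinearMap.proj (R := ℝ) (φ := fun _ : Fin n => ℂ) j).comp
      (ContinuousLinearMap.fst ℝ (Cn n) (Cn n))).hasFDerivAt
  have h' : HasFDerivAt (fun p : Cn n × Cn n => (starRingEnd ℂ) (p.1 j))
      ((Complex.conjCLE : ℂ →L[ℝ] ℂ).comp
      ((ContinuousLinearMap.proj j).comp (ContinuousLinearMap.fst ℝ (Cn n) (Cn n)))) p :=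
    (Complex.conjCLE : ℂ →L[ℝ] ℂ).hasFDerivAt.comp p h
  rw [D_apply]
  by_cases hjk : j = k
  · subst hjk
    cases b
    · have e : (co (false, j) : Cn n × Cn n → ℂ) = fun p => p.1 j := rfl
      rw [e, h.fderiv]
      cases c <;> simp [inj, sg]; norm_num
    · have e : (co (true, j) : Cn n × Cn n → ℂ) = fun p => (starRingEnd ℂ) (p.1 j) := rfl
      rw [e, h'.fderiv]
      cases c <;> simp [inj, sg]; norm_num
  · cases b
    · have e : (co (false, j) : Cn n × Cn n → ℂ) = fun p => p.1 j := rfl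
      rw [e, h.fderiv]
      simp [inj, hjk]
    · have e : (co (true, j) : Cn n × Cn n → ℂ) = fun p => (starRingEnd ℂ) (p.1 j) := rfl
      rw [e, h'.fderiv]
      simp [inj, hjk]

/-- quadratic form -/
def qd {n : ℕ} (c : Fin n → ℂ) : Sm n := ∑ t, c t • (co (false, t) * co (true, t))

lemma qd_apply {n : ℕ} (c : Fin n → ℂ) (z w : Cn n) :
    (qd c : Cn n × Cn n → ℂ) (z, w) = ∑ t, c t * (Complex.normSq (z t) : ℂ) := by
  simp [qd, co, Complex.normSq_eq_conj_mul_self, mul_comm]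

lemma ev_co {n : ℕ} (x : Bool × Fin n) : ev (co x) = 0 := by
  obtain ⟨b, j⟩ := x
  cases b
  · rfl
  · change (starRingEnd ℂ) 0 = 0
    simp

lemma D_qd {n : ℕ} (c : Fin n → ℂ) (x y : Bool × Fin n) :
    ev (D false x (qd c)) = 0 ∧ ev (D false y (D false x (qd c))) = if y = br x then c x.2 else 0 := by
  obtain ⟨b, j⟩ := x
  obtain ⟨d, k⟩ := y
  constructor
  · simp [qd, Derivation.leibniz, ev_co]
  · simp only [qd, map_sum, Derivation.map_smul, map_smul, Derivation.leibniz, map_add, smul_eq_mul,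
      map_mul, D_co, ev_co]
    by_cases h : j = k
    · subst h
      cases b <;> cases d <;> simp [br, Prod.ext_iff]
    · have h' : k ≠ j := fun e => h e.symm
      cases b <;> cases d <;> simp [br, Prod.ext_iff, h']


def Q {n : ℕ} (Ψ Φ : Sm n) (x : Bool × Fin n) : Sm n :=
  (sg x.1 * I) • D false x Ψ + D false x Φ

def mm {n : ℕ} (lam : Fin n → ℝ) (x : Bool × Fin n) : ℂ := (lam x.2 : ℂ) + sg x.1 * (|lam x.2| : ℝ)

def eps (l : Bool) : ℂ := if l then -1 else 1

structure Core {n : ℕ} (lam : Fin n → ℝ) (Ψ Φ : Sm n) : Prop where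
  hΦw : ∀ x, D true x Φ = 0
  hΦr : kap Φ = Φ
  hΨ : Ψ = - kap (swp Ψ)
  hQd : ∀ x z, (Q Ψ Φ x : Cn n × Cn n → ℂ) (z, z) = 0
  hF : Flat ((∑ t, Q Ψ Φ (true, t) * Q Ψ Φ (false, t) : Sm n) : Cn n × Cn n → ℂ)
  h1 : ∀ x y, ev (D false y (Q Ψ Φ x)) = if y = br x then mm lam y else 0

section
variable {n : ℕ} {lam : Fin n → ℝ} {Ψ Φ : Sm n}

lemma Core.ev0 (h : Core lam Ψ Φ) (x) : ev (Q Ψ Φ x) = 0 := h.hQd x 0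

lemma Core.ev1 (h : Core lam Ψ Φ) (l x y) :
    ev (D l y (Q Ψ Φ x)) = eps l * if y = br x then mm lam y else 0 := by
  cases l
  · simp [eps, h.h1]
  · have h2 : ev (D false y (Q Ψ Φ x) + D true y (Q Ψ Φ x)) = 0 :=
      D_diag y (Q Ψ Φ x) (h.hQd x) 0
    rw [map_add, h.h1] at h2
    simp only [eps, if_true]
    linear_combination h2

lemma Core.collapse (h : Core lam Ψ Φ) (l x) (G : Bool × Fin n → ℂ) :
    ∑ t, (ev (D l x (Q Ψ Φ (true, t))) * G (false, t) + ev (D l x (Q Ψ Φ (false, t))) * G (true, t))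
      = eps l * mm lam x * G x := by
  obtain ⟨b, j⟩ := x
  simp only [h.ev1, br]
  cases b <;> simp [Prod.ext_iff, Finset.sum_ite_eq]

lemma leib3 (d1 d2 d3 : Derivation ℂ (Sm n) (Sm n)) (p r : Sm n) (hp : ev p = 0) (hr : ev r = 0) :
    ev (d1 (d2 (d3 (p * r)))) =
      (ev (d1 p) * ev (d2 (d3 r)) + ev (d1 r) * ev (d2 (d3 p))) +
      (ev (d2 p) * ev (d1 (d3 r)) + ev (d2 r) * ev (d1 (d3 p))) +
      (ev (d3 p) * ev (d1 (d2 r)) + ev (d3 r) * ev (d1 (d2 p))) := by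
  simp only [Derivation.leibniz, map_add, map_mul, smul_eq_mul, hp, hr]
  ring

lemma leib4 (d1 d2 d3 d4 : Derivation ℂ (Sm n) (Sm n)) (p r : Sm n) (hp : ev p = 0) (hr : ev r = 0) :
    ev (d1 (d2 (d3 (d4 (p * r))))) =
      (ev (d1 p) * ev (d2 (d3 (d4 r))) + ev (d1 r) * ev (d2 (d3 (d4 p)))) +
      (ev (d2 p) * ev (d1 (d3 (d4 r))) + ev (d2 r) * ev (d1 (d3 (d4 p)))) +
      (ev (d3 p) * ev (d1 (d2 (d4 r))) + ev (d3 r) * ev (d1 (d2 (d4 p)))) +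
      (ev (d4 p) * ev (d1 (d2 (d3 r))) + ev (d4 r) * ev (d1 (d2 (d3 p)))) +
      (ev (d1 (d2 p)) * ev (d3 (d4 r)) + ev (d3 (d4 p)) * ev (d1 (d2 r)) +
       ev (d1 (d3 p)) * ev (d2 (d4 r)) + ev (d2 (d4 p)) * ev (d1 (d3 r)) +
       ev (d1 (d4 p)) * ev (d2 (d3 r)) + ev (d2 (d3 p)) * ev (d1 (d4 r))) := by
  simp only [Derivation.leibniz, map_add, map_mul, smul_eq_mul, hp, hr]
  ring

lemma Core.third (h : Core lam Ψ Φ) (l1 l2 l3 x1 x2 x3) :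
    eps l1 * mm lam x1 * ev (D l2 x2 (D l3 x3 (Q Ψ Φ x1))) +
    eps l2 * mm lam x2 * ev (D l1 x1 (D l3 x3 (Q Ψ Φ x2))) +
    eps l3 * mm lam x3 * ev (D l1 x1 (D l2 x2 (Q Ψ Φ x3))) = 0 := by
  have h0 := Flat.ev _ (Flat.D _ (Flat.D _ (Flat.D _ h.hF l3 x3) l2 x2) l1 x1)
  simp only [map_sum] at h0
  rw [Finset.sum_congr rfl (fun t _ => leib3 _ _ _ _ _ (h.ev0 _) (h.ev0 _)),
    Finset.sum_add_distrib, Finset.sum_add_distrib,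
    h.collapse l1 x1 (fun x => ev (D l2 x2 (D l3 x3 (Q Ψ Φ x)))),
    h.collapse l2 x2 (fun x => ev (D l1 x1 (D l3 x3 (Q Ψ Φ x)))),
    h.collapse l3 x3 (fun x => ev (D l1 x1 (D l2 x2 (Q Ψ Φ x))))] at h0
  exact h0

/-- second z-derivatives of Q -/
def qq (Ψ Φ : Sm n) (x y y' : Bool × Fin n) : ℂ := ev (D false y (D false y' (Q Ψ Φ x)))

lemma Core.fourth (h : Core lam Ψ Φ) (x1 x2 x3 x4) :
    mm lam x1 * ev (D false x2 (D false x3 (D false x4 (Q Ψ Φ x1)))) +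
    mm lam x2 * ev (D false x1 (D false x3 (D false x4 (Q Ψ Φ x2)))) +
    mm lam x3 * ev (D false x1 (D false x2 (D false x4 (Q Ψ Φ x3)))) +
    mm lam x4 * ev (D false x1 (D false x2 (D false x3 (Q Ψ Φ x4)))) +
    ∑ t, (qq Ψ Φ (true, t) x1 x2 * qq Ψ Φ (false, t) x3 x4 +
      qq Ψ Φ (true, t) x3 x4 * qq Ψ Φ (false, t) x1 x2 +
      qq Ψ Φ (true, t) x1 x3 * qq Ψ Φ (false, t) x2 x4 +
      qq Ψ Φ (true, t) x2 x4 * qq Ψ Φ (false, t) x1 x3 +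
      qq Ψ Φ (true, t) x1 x4 * qq Ψ Φ (false, t) x2 x3 +
      qq Ψ Φ (true, t) x2 x3 * qq Ψ Φ (false, t) x1 x4) = 0 := by
  have h0 := Flat.ev _ (Flat.D _ (Flat.D _ (Flat.D _ (Flat.D _ h.hF false x4) false x3) false x2)
    false x1)
  simp only [map_sum] at h0
  rw [Finset.sum_congr rfl (fun t _ => leib4 _ _ _ _ _ _ (h.ev0 _) (h.ev0 _)),
    Finset.sum_add_distrib, Finset.sum_add_distrib, Finset.sum_add_distrib, Finset.sum_add_distrib,
    h.collapse false x1 (fun x => ev (D false x2 (D false x3 (D false x4 (Q Ψ Φ x))))),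
    h.collapse false x2 (fun x => ev (D false x1 (D false x3 (D false x4 (Q Ψ Φ x))))),
    h.collapse false x3 (fun x => ev (D false x1 (D false x2 (D false x4 (Q Ψ Φ x))))),
    h.collapse false x4 (fun x => ev (D false x1 (D false x2 (D false x3 (Q Ψ Φ x)))))] at h0
  simp only [eps, Bool.false_eq_true, if_false, one_mul] at h0
  exact h0

def ee (Ψ : Sm n) (l1 l2 l3 : Bool) (x1 x2 x3 : Bool × Fin n) : ℂ :=
  ev (D l1 x1 (D l2 x2 (D l3 x3 Ψ)))

lemma ee_swap12 (l1 l2 l3 : Bool) (x1 x2 x3 : Bool × Fin n) :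
    ee Ψ l1 l2 l3 x1 x2 x3 = ee Ψ l2 l1 l3 x2 x1 x3 := by
  unfold ee; rw [D_comm]

lemma ee_swap23 (l1 l2 l3 : Bool) (x1 x2 x3 : Bool × Fin n) :
    ee Ψ l1 l2 l3 x1 x2 x3 = ee Ψ l1 l3 l2 x1 x3 x2 := by
  unfold ee; rw [D_comm l2]

lemma ev_kap (f : Sm n) : ev (kap f) = (starRingEnd ℂ) (ev f) := rfl
lemma ev_swp (f : Sm n) : ev (swp f) = ev f := rfl

lemma Core.ee_conj (h : Core lam Ψ Φ) (l1 l2 l3 : Bool) (x1 x2 x3 : Bool × Fin n) :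
    ee Ψ l1 l2 l3 x1 x2 x3 = - (starRingEnd ℂ) (ee Ψ (!l1) (!l2) (!l3) (br x1) (br x2) (br x3)) := by
  unfold ee
  conv_lhs => rw [h.hΨ]
  simp only [map_neg, D_kap, D_swp, ev_kap, ev_swp]

lemma Core.ff_conj (h : Core lam Ψ Φ) (x1 x2 x3 : Bool × Fin n) :
    ee Φ false false false x1 x2 x3 =
      (starRingEnd ℂ) (ee Φ false false false (br x1) (br x2) (br x3)) := by
  unfold ee
  conv_lhs => rw [← h.hΦr]
  simp only [D_kap, ev_kap]

lemma ev_Q (l2 l3 x1 x2 x3) : ev (D l2 x2 (D l3 x3 (Q Ψ Φ x1))) =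
    sg x1.1 * I * ee Ψ l2 l3 false x2 x3 x1 + ee Φ l2 l3 false x2 x3 x1 := by
  simp only [Q, map_add, Derivation.map_smul, map_smul, ee, smul_eq_mul]

lemma Core.ff_w1 (h : Core lam Ψ Φ) (l2 l3) (x1 x2 x3 : Bool × Fin n) :
    ee Φ true l2 l3 x1 x2 x3 = 0 := by
  rw [ee_swap12, ee_swap23]; unfold ee; rw [h.hΦw]; simp

lemma Core.ff_w2 (h : Core lam Ψ Φ) (l2 l3) (x1 x2 x3 : Bool × Fin n) :
    ee Φ l2 true l3 x1 x2 x3 = 0 := by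
  rw [ee_swap23]; unfold ee; rw [h.hΦw]; simp

lemma Core.diag2 (h : Core lam Ψ Φ) (x1 x2 x3) :
    sg x1.1 * I * (ee Ψ false false false x2 x3 x1 + ee Ψ false true false x2 x3 x1 +
      ee Ψ true false false x2 x3 x1 + ee Ψ true true false x2 x3 x1)
      + ee Φ false false false x2 x3 x1 = 0 := by
  have h2 : ev (D false x2 (D false x3 (Q Ψ Φ x1) + D true x3 (Q Ψ Φ x1)) +
      D true x2 (D false x3 (Q Ψ Φ x1) + D true x3 (Q Ψ Φ x1))) = 0 :=
    D_diag x2 _ (D_diag x3 (Q Ψ Φ x1) (h.hQd x1)) 0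
  simp only [map_add, ev_Q, h.ff_w1, h.ff_w2] at h2
  linear_combination h2

/-- third-order relation in terms of `ee` -/
lemma Core.third' (h : Core lam Ψ Φ) (l1 l2 l3 x1 x2 x3) :
    eps l1 * mm lam x1 * (sg x1.1 * I * ee Ψ false l2 l3 x1 x2 x3 + ee Φ false l2 l3 x1 x2 x3) +
    eps l2 * mm lam x2 * (sg x2.1 * I * ee Ψ l1 false l3 x1 x2 x3 + ee Φ l1 false l3 x1 x2 x3) +
    eps l3 * mm lam x3 * (sg x3.1 * I * ee Ψ l1 l2 false x1 x2 x3 + ee Φ l1 l2 false x1 x2 x3) = 0 := by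
  have h0 := h.third l1 l2 l3 x1 x2 x3
  simp only [ev_Q] at h0
  rw [ee_swap23 l2, ee_swap12 l2, ee_swap23 (Ψ := Φ) l2, ee_swap12 (Ψ := Φ) l2,
    ee_swap23 l1 l3, ee_swap23 (Ψ := Φ) l1 l3] at h0
  exact h0

lemma qq_eq (x y y') : qq Ψ Φ x y y' =
    sg x.1 * I * ee Ψ false false false x y y' + ee Φ false false false x y y' := by
  unfold qq
  rw [ev_Q, ee_swap23, ee_swap12, ee_swap23 (Ψ := Φ), ee_swap12 (Ψ := Φ)]

/-- all-z third order relation -/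
lemma Core.third_z (h : Core lam Ψ Φ) (x1 x2 x3) :
    (mm lam x1 * sg x1.1 + mm lam x2 * sg x2.1 + mm lam x3 * sg x3.1) * I *
      ee Ψ false false false x1 x2 x3 +
    (mm lam x1 + mm lam x2 + mm lam x3) * ee Φ false false false x1 x2 x3 = 0 := by
  have h0 := h.third' false false false x1 x2 x3
  simp only [eps, Bool.false_eq_true, if_false] at h0
  linear_combination h0

lemma Core.qq_val (h : Core lam Ψ Φ) (x y y')
    (hne : mm lam x * sg x.1 + mm lam y * sg y.1 + mm lam y' * sg y'.1 ≠ 0) :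
    qq Ψ Φ x y y' = (mm lam x * sg x.1 + mm lam y * sg y.1 + mm lam y' * sg y'.1 -
      sg x.1 * (mm lam x + mm lam y + mm lam y')) /
      (mm lam x * sg x.1 + mm lam y * sg y.1 + mm lam y' * sg y'.1) *
        ee Φ false false false x y y' := by
  have h0 := h.third_z x y y'
  rw [qq_eq]
  generalize mm lam x * sg x.1 + mm lam y * sg y.1 + mm lam y' * sg y'.1 = K at *
  field_simp
  linear_combination sg x.1 * h0

lemma Core.kernel (h : Core lam Ψ Φ) (A B C : Bool × Fin n) (s : ℂ) (a b c : ℝ)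
    (hs : s * s = 1) (hsr : (starRingEnd ℂ) s = s)
    (ha : 0 < a) (hb : 0 < b) (hc : 0 < c)
    (hA : sg A.1 = s) (hB : sg B.1 = -s) (hC : sg C.1 = s)
    (hA' : sg (br A).1 = -s) (hB' : sg (br B).1 = s) (hC' : sg (br C).1 = -s)
    (mA : mm lam (br A) = -2 * s * a) (mB : mm lam (br B) = 2 * s * b)
    (mC : mm lam (br C) = -2 * s * c) :
    qq Ψ Φ A B C = (2 * a * c / (a + b + c) * (1 / (a + b) + 1 / (b + c))) *
      ee Φ false false false A B C := by
  have t0 := h.third' false false false (br A) (br B) (br C)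
  have tab := h.third' false false true (br A) (br B) (br C)
  have tbc := h.third' true false false (br A) (br B) (br C)
  have tac := h.third' false true false (br A) (br B) (br C)
  have tb := h.third' true false true (br A) (br B) (br C)
  have tc := h.third' true true false (br A) (br B) (br C)
  simp only [eps, Bool.false_eq_true, if_false, if_true, hA', hB', hC', mA, mB, mC, h.ff_w1, h.ff_w2,
    show ∀ x1 x2 x3, ee Φ false false true x1 x2 x3 = 0 from fun x1 x2 x3 => by
      rw [ee_swap23]; exact h.ff_w2 _ _ _ _ _] at t0 tab tbc tac tb tc
  have hd := h.diag2 A B C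
  rw [ee_swap23 (Ψ := Φ), ee_swap12 (Ψ := Φ), hA] at hd
  rw [ee_swap23, ee_swap12, ee_swap23 false true, ee_swap12 false false true,
    ee_swap23 true false, ee_swap12 true false false, ee_swap23 true true,
    ee_swap12 true false true,
    h.ee_conj false false true, h.ee_conj false true false,
    h.ee_conj false true true] at hd
  simp only [Bool.not_false, Bool.not_true] at hd
  rw [qq_eq, hA]
  rw [h.ff_conj] at hd ⊢
  generalize ee Φ false false false (br A) (br B) (br C) = f at *
  generalize ee Ψ false false false (br A) (br B) (br C) = e0 at *
  generalize ee Ψ false false true (br A) (br B) (br C) = eab at *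
  generalize ee Ψ true false false (br A) (br B) (br C) = ebc at *
  generalize ee Ψ false true false (br A) (br B) (br C) = eac at *
  generalize ee Ψ true false true (br A) (br B) (br C) = eb at *
  generalize ee Ψ true true false (br A) (br B) (br C) = ec at *
  have hda : (a : ℂ) ≠ 0 := by exact_mod_cast ha.ne'
  have hdb : (b : ℂ) ≠ 0 := by exact_mod_cast hb.ne'
  have hdc : (c : ℂ) ≠ 0 := by exact_mod_cast hc.ne'
  have hM : (a + b + c : ℂ) ≠ 0 := by exact_mod_cast (by positivity : a + b + c ≠ 0)
  have hab : (a + b : ℂ) ≠ 0 := by exact_mod_cast (by positivity : a + b ≠ 0)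
  have hbc : (b + c : ℂ) ≠ 0 := by exact_mod_cast (by positivity : b + c ≠ 0)
  have hac : (a + c : ℂ) ≠ 0 := by exact_mod_cast (by positivity : a + c ≠ 0)
  have hss : s ^ 2 = 1 := by rw [sq, hs]
  have r0 : I * e0 = s * (a + c - b) / (a + b + c) * f := by
    field_simp
    linear_combination (1 / 2) * t0 + (-a - b - c) * I * e0 * hss
  have rab : I * eab = - (2 * s * b * c) / ((a + b + c) * (a + b)) * f := by
    have : (a + b) * (I * eab) = c * (I * e0) - s * c * f := by
      linear_combination (1 / 2) * tab + (-(a + b) * I * eab + c * I * e0) * hss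
    rw [r0] at this
    field_simp at this ⊢
    linear_combination this
  have rbc : I * ebc = - (2 * s * b * a) / ((a + b + c) * (b + c)) * f := by
    have : (b + c) * (I * ebc) = a * (I * e0) - s * a * f := by
      linear_combination (1 / 2) * tbc + (-(b + c) * I * ebc + a * I * e0) * hss
    rw [r0] at this
    field_simp at this ⊢
    linear_combination this
  have rac : I * eac = (2 * s * b) / (a + b + c) * f := by
    have : (a + c) * (I * eac) = b * (I * e0) + s * b * f := by
      linear_combination (1 / 2) * tac + (-(a + c) * I * eac + b * I * e0) * hss
    rw [r0] at this
    have h3 : (a + c) * (I * eac) = (a + c) * ((2 * s * b) / (a + b + c) * f) := by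
      rw [this]; field_simp; ring
    exact mul_left_cancel₀ hac h3
  have rb : I * eb = - (2 * s * a * c) / (a + b + c) * (1 / (a + b) + 1 / (b + c)) * f := by
    have : b * (I * eb) = a * (I * eab) + c * (I * ebc) := by
      linear_combination (1 / 2) * tb + (-b * I * eb + a * I * eab + c * I * ebc) * hss
    rw [rab, rbc] at this
    apply mul_left_cancel₀ hdb
    rw [this]; field_simp; ring
  have rc : I * ec = - (I * ebc) := by
    have : c * (I * ec) = a * (I * eac) + b * (I * ebc) := by
      linear_combination (1 / 2) * tc + (-c * I * ec + a * I * eac + b * I * ebc) * hss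
    rw [rac, rbc] at this
    apply mul_left_cancel₀ hdc
    rw [this, rbc]; field_simp; ring
  have rb' := congrArg (starRingEnd ℂ) rb
  have rc' := congrArg (starRingEnd ℂ) rc
  simp only [map_mul, map_neg, map_add, map_div₀, conj_I, conj_ofReal, hsr, map_one,
    Complex.conj_ofNat] at rb' rc'
  linear_combination hd - s * rb' - s * rc' + (2 * a * c / (a + b + c) * (1 / (a + b) + 1 / (b + c))) *
    (starRingEnd ℂ) f * hss
end


def mkPhi {n : ℕ} (φ : Cn n → ℝ) (h : ContDiff ℝ (⊤ : ℕ∞) φ) : Sm n :=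
  ⟨fun p => cplx φ p.1, (Complex.ofRealCLM.contDiff.comp h).comp contDiff_fst⟩

def mkPsi {n : ℕ} (ψ : Cn n → Cn n → ℂ)
    (h : ContDiff ℝ (⊤ : ℕ∞) (fun p : Cn n × Cn n => ψ p.1 p.2)) : Sm n :=
  ⟨fun p => ψ p.1 p.2, h⟩

lemma mkPhi_w {n : ℕ} (φ : Cn n → ℝ) (h : ContDiff ℝ (⊤ : ℕ∞) φ) (x) : D true x (mkPhi φ h) = 0 := by
  ext p
  have hc : ContDiff ℝ (⊤ : ℕ∞) (cplx φ) := Complex.ofRealCLM.contDiff.comp h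
  have hd : DifferentiableAt ℝ (cplx φ) p.1 := hc.differentiable (by simp) p.1
  have h1 : HasFDerivAt (mkPhi φ h : Cn n × Cn n → ℂ)
      ((fderiv ℝ (cplx φ) p.1).comp (ContinuousLinearMap.fst ℝ (Cn n) (Cn n))) p :=
    hd.hasFDerivAt.comp p hasFDerivAt_fst
  rw [D_apply, h1.fderiv]
  simp [inj]

lemma core_of {n : ℕ} (lam : Fin n → ℝ) (φ : Cn n → ℝ) (hφ : PhiOK lam φ)
    (ψ : Cn n → Cn n → ℂ) (hψ : Admissible lam φ ψ) :
    Core lam (mkPsi ψ hψ.1) (mkPhi φ hφ.1) := by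
  obtain ⟨hφ1, hφ2⟩ := hφ
  obtain ⟨hs, ha1, ha2, hb, hc1, hc2, hc3, hc4, hd, he⟩ := hψ
  have dΨ : ∀ x z w, (D false x (mkPsi ψ hs) : Cn n × Cn n → ℂ) (z, w) = W x (fun x => ψ x w) z := by
    intro x z w
    exact (congrFun (W_z x (mkPsi ψ hs) w) z).symm
  have dΦ : ∀ x z w, (D false x (mkPhi φ hφ1) : Cn n × Cn n → ℂ) (z, w) = W x (cplx φ) z := by
    intro x z w
    exact (congrFun (W_z x (mkPhi φ hφ1) w) z).symm
  have Qa : ∀ x z w, (Q (mkPsi ψ hs) (mkPhi φ hφ1) x : Cn n × Cn n → ℂ) (z, w) =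
      (sg x.1 * I) * W x (fun x => ψ x w) z + W x (cplx φ) z := by
    intro x z w
    rw [← dΨ, ← dΦ x z w]; rfl
  refine ⟨mkPhi_w φ hφ1, ?_, ?_, ?_, ?_, ?_⟩
  · ext p
    exact Complex.conj_ofReal _
  · ext p
    exact ha2 p.1 p.2
  · rintro ⟨b, j⟩ z
    rw [Qa]
    cases b
    · have := hc2 z j
      simp only [W, sg, Bool.false_eq_true, if_false]
      rw [this]
      linear_combination (wd j (cplx φ) z) * I_mul_I
    · have := hc1 z j
      simp only [W, sg, if_true]
      rw [this]
      linear_combination (wdb j (cplx φ) z) * I_mul_I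
  · intro m
    have := hd m 0
    rw [← this]
    congr 1
    ext p
    rw [AddSubmonoidClass.coe_finset_sum, Finset.sum_apply]
    refine Finset.sum_congr rfl fun t _ => ?_
    have e1 := Qa (true, t) p.1 p.2
    have e2 := Qa (false, t) p.1 p.2
    simp only [W, sg, Bool.false_eq_true, if_false, if_true, one_mul] at e1 e2
    change (Q (mkPsi ψ hs) (mkPhi φ hφ1) (true, t) : Cn n × Cn n → ℂ) (p.1, p.2) *
      (Q (mkPsi ψ hs) (mkPhi φ hφ1) (false, t) : Cn n × Cn n → ℂ) (p.1, p.2) = _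
    rw [e1, e2]
    ring
  · have oΦ : (fun z => ((mkPhi φ hφ1 - qd (fun t => (lam t : ℂ)) : Sm n) : Cn n × Cn n → ℂ) (z, 0))
        =O[nhds 0] fun z => ‖z‖ ^ 3 := by
      refine (IsBigO.of_norm_left ?_)
      refine hφ2.norm_left.congr (fun z => ?_) (fun z => rfl)
      have : ((mkPhi φ hφ1 - qd (fun t => (lam t : ℂ)) : Sm n) : Cn n × Cn n → ℂ) (z, 0) =
          ((φ z - ∑ j, lam j * Complex.normSq (z j) : ℝ) : ℂ) := by
        change (φ z : ℂ) - (qd (fun t => (lam t : ℂ)) : Cn n × Cn n → ℂ) (z, 0) = _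
        rw [qd_apply]
        push_cast
        rfl
      rw [this, Complex.norm_real]
    have oΨ : (fun z => ((mkPsi ψ hs - qd (fun t => I * (|lam t| : ℝ)) : Sm n) : Cn n × Cn n → ℂ) (z, 0))
        =O[nhds 0] fun z => ‖z‖ ^ 3 := by
      have ht : Filter.Tendsto (fun z : Cn n => ((z, 0) : Cn n × Cn n)) (nhds 0) (nhds 0) := by
        have : Continuous (fun z : Cn n => ((z, 0) : Cn n × Cn n)) := by fun_prop
        exact this.tendsto 0
      refine (he.comp_tendsto ht).congr (fun z => ?_) (fun z => ?_)
      · change _ = ψ z 0 - (qd (fun t => I * (|lam t| : ℝ)) : Cn n × Cn n → ℂ) (z, 0)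
        rw [qd_apply]
        simp [Finset.mul_sum, mul_assoc]
      · simp [Prod.norm_def]
    intro x y
    have p1 := (D_O _ oΦ x y).2
    have p2 := (D_O _ oΨ x y).2
    simp only [map_sub, (D_qd _ x y).2] at p1 p2
    simp only [Q, map_add, Derivation.map_smul, map_smul, smul_eq_mul]
    rw [sub_eq_zero.1 p1, sub_eq_zero.1 p2]
    by_cases hxy : y = br x
    · subst hxy
      obtain ⟨b, j⟩ := x
      cases b
      · simp only [mm, br, sg, if_true, Bool.not_false, Bool.false_eq_true, if_false]
        linear_combination (-(|lam j| : ℝ) : ℂ) * I_mul_I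
      · simp only [mm, br, sg, if_true, Bool.not_true, Bool.false_eq_true, if_false]
        linear_combination ((|lam j| : ℝ) : ℂ) * I_mul_I
    · simp [hxy]

lemma qq_swap {n : ℕ} (Ψ Φ : Sm n) (x y y') : qq Ψ Φ x y y' = qq Ψ Φ x y' y := by
  unfold qq; rw [D_comm]

lemma Core.qv {n : ℕ} {lam : Fin n → ℝ} {Ψ Φ : Sm n} (h : Core lam Ψ Φ) (x y y') (K N : ℂ)
    (hK : mm lam x * sg x.1 + mm lam y * sg y.1 + mm lam y' * sg y'.1 = K) (hK0 : K ≠ 0)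
    (hN : K - sg x.1 * (mm lam x + mm lam y + mm lam y') = N) :
    qq Ψ Φ x y y' = N / K * ee Φ false false false x y y' := by
  subst hK hN
  exact h.qq_val x y y' hK0

lemma Core.ev3 {n : ℕ} {Ψ Φ : Sm n} (x1 x2 x3 x4) :
    ev (D false x2 (D false x3 (D false x4 (Q Ψ Φ x1)))) =
    sg x1.1 * I * ev (D false x2 (D false x3 (D false x4 (D false x1 Ψ)))) +
      ev (D false x2 (D false x3 (D false x4 (D false x1 Φ)))) := by
  simp only [Q, map_add, Derivation.map_smul, map_smul, smul_eq_mul]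

theorem statement7_core {n q : ℕ} {lam : Fin n → ℝ}
    (hneg : ∀ j : Fin n, (j : ℕ) < q → lam j < 0)
    (hpos : ∀ j : Fin n, q ≤ (j : ℕ) → 0 < lam j)
    {Ψ Φ : Sm n} (h : Core lam Ψ Φ)
    (j k : Fin n) (hj : q ≤ (j : ℕ)) (hk : (k : ℕ) < q) :
    ev (D false (true, j) (D false (false, j) (D false (true, k) (D false (false, k) Ψ)))) =
      (∑ t : Fin n, if (t : ℕ) < q then
        ((2 * |lam j| / ((|lam j| + |lam k|) * (|lam t| + |lam j|)) : ℝ) : ℂ) * Complex.I *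
            (Complex.normSq (ee Φ false false false (true, t) (false, j) (false, k)) : ℂ)
        + ((2 * |lam t| * |lam k| * |lam j| /
              ((|lam j| + |lam k|) * (|lam t| + |lam k| + |lam j|) ^ 2) *
              (1 / (|lam j| + |lam t|) + 1 / (|lam j| + |lam k|)) : ℝ) : ℂ) * Complex.I *
            (Complex.normSq (ee Φ false false false (true, t) (false, j) (true, k)) : ℂ)
        + ((2 * |lam j| / ((|lam j| + |lam t|) * (|lam j| + |lam k|)) : ℝ) : ℂ) * Complex.I *
            (ee Φ false false false (false, t) (true, j) (false, j) *
              ee Φ false false false (true, t) (true, k) (false, k))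
      else 0)
      + (∑ t : Fin n, if q ≤ (t : ℕ) then
        ((2 * |lam k| / ((|lam j| + |lam k|) * (|lam t| + |lam k|)) : ℝ) : ℂ) * Complex.I *
            (Complex.normSq (ee Φ false false false (true, t) (false, j) (false, k)) : ℂ)
        + ((2 * |lam t| * |lam k| * |lam j| /
              ((|lam j| + |lam k|) * (|lam t| + |lam k| + |lam j|) ^ 2) *
              (1 / (|lam j| + |lam k|) + 1 / (|lam t| + |lam k|)) : ℝ) : ℂ) * Complex.I *
            (Complex.normSq (ee Φ false false false (true, t) (true, j) (false, k)) : ℂ)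
        + ((2 * |lam k| / ((|lam k| + |lam t|) * (|lam j| + |lam k|)) : ℝ) : ℂ) * Complex.I *
            (ee Φ false false false (false, t) (true, j) (false, j) *
              ee Φ false false false (true, t) (true, k) (false, k))
      else 0)
      + Complex.I * (((lam j + lam k) / (|lam j| + |lam k|) : ℝ) : ℂ) *
          ev (D false (true, j) (D false (false, j) (D false (true, k) (D false (false, k) Φ)))) := by
  have h4 := h.fourth (true, j) (false, j) (true, k) (false, k)
  have mTp : ∀ t : Fin n, q ≤ (t : ℕ) → mm lam (true, t) = 2 * (|lam t| : ℝ) := by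
    intro t ht
    simp only [mm, sg, if_true, abs_of_pos (hpos t ht)]; ring
  have mFp : ∀ t : Fin n, q ≤ (t : ℕ) → mm lam (false, t) = 0 := by
    intro t ht
    simp only [mm, sg, Bool.false_eq_true, if_false, abs_of_pos (hpos t ht)]; ring
  have mTn : ∀ t : Fin n, (t : ℕ) < q → mm lam (true, t) = 0 := by
    intro t ht
    simp only [mm, sg, if_true, abs_of_neg (hneg t ht)]; push_cast; ring
  have mFn : ∀ t : Fin n, (t : ℕ) < q → mm lam (false, t) = -2 * (|lam t| : ℝ) := by
    intro t ht
    simp only [mm, sg, Bool.false_eq_true, if_false, abs_of_neg (hneg t ht)]; push_cast; ring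
  have hmu : ∀ t : Fin n, 0 < |lam t| := by
    intro t
    rcases lt_or_ge (t : ℕ) q with ht | ht
    · exact abs_pos.2 (hneg t ht).ne
    · exact abs_pos.2 (hpos t ht).ne'
  have hmuC : ∀ t : Fin n, ((|lam t| : ℝ) : ℂ) ≠ 0 := fun t => by exact_mod_cast (hmu t).ne'
  have hadd : ∀ s t : Fin n, ((|lam s| : ℝ) : ℂ) + (|lam t| : ℝ) ≠ 0 := fun s t => by
    have := add_pos (hmu s) (hmu t); exact_mod_cast this.ne'
  have hadd3 : ∀ r s t : Fin n, ((|lam r| : ℝ) : ℂ) + (|lam s| : ℝ) + (|lam t| : ℝ) ≠ 0 :=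
    fun r s t => by
      have := add_pos (add_pos (hmu r) (hmu s)) (hmu t); exact_mod_cast this.ne'
  have sT : sg true = 1 := rfl
  have sF : sg false = -1 := rfl
  have key : ∀ G H : Fin n → ℂ,
      (∀ t : Fin n, (t : ℕ) < q → 2 * ((|lam j| : ℝ) + (|lam k| : ℝ)) * G t = I *
        (qq Ψ Φ (true, t) (true, j) (false, j) * qq Ψ Φ (false, t) (true, k) (false, k) +
      qq Ψ Φ (true, t) (true, k) (false, k) * qq Ψ Φ (false, t) (true, j) (false, j) +
      qq Ψ Φ (true, t) (true, j) (true, k) * qq Ψ Φ (false, t) (false, j) (false, k) +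
      qq Ψ Φ (true, t) (false, j) (false, k) * qq Ψ Φ (false, t) (true, j) (true, k) +
      qq Ψ Φ (true, t) (true, j) (false, k) * qq Ψ Φ (false, t) (false, j) (true, k) +
      qq Ψ Φ (true, t) (false, j) (true, k) * qq Ψ Φ (false, t) (true, j) (false, k))) →
      (∀ t : Fin n, q ≤ (t : ℕ) → 2 * ((|lam j| : ℝ) + (|lam k| : ℝ)) * H t = I *
        (qq Ψ Φ (true, t) (true, j) (false, j) * qq Ψ Φ (false, t) (true, k) (false, k) +
      qq Ψ Φ (true, t) (true, k) (false, k) * qq Ψ Φ (false, t) (true, j) (false, j) +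
      qq Ψ Φ (true, t) (true, j) (true, k) * qq Ψ Φ (false, t) (false, j) (false, k) +
      qq Ψ Φ (true, t) (false, j) (false, k) * qq Ψ Φ (false, t) (true, j) (true, k) +
      qq Ψ Φ (true, t) (true, j) (false, k) * qq Ψ Φ (false, t) (false, j) (true, k) +
      qq Ψ Φ (true, t) (false, j) (true, k) * qq Ψ Φ (false, t) (true, j) (false, k))) →
      ev (D false (true, j) (D false (false, j) (D false (true, k) (D false (false, k) Ψ)))) =
        (∑ t : Fin n, if (t : ℕ) < q then G t else 0) + (∑ t : Fin n, if q ≤ (t : ℕ) then H t else 0)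
        + Complex.I * (((lam j + lam k) / (|lam j| + |lam k|) : ℝ) : ℂ) *
          ev (D false (true, j) (D false (false, j) (D false (true, k) (D false (false, k) Φ)))) := by
    intro G H hG hH
    have hsum : 2 * ((|lam j| : ℝ) + (|lam k| : ℝ)) *
        ((∑ t : Fin n, if (t : ℕ) < q then G t else 0) + (∑ t : Fin n, if q ≤ (t : ℕ) then H t else 0))
        = I * ∑ t, (qq Ψ Φ (true, t) (true, j) (false, j) * qq Ψ Φ (false, t) (true, k) (false, k) +
      qq Ψ Φ (true, t) (true, k) (false, k) * qq Ψ Φ (false, t) (true, j) (false, j) +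
      qq Ψ Φ (true, t) (true, j) (true, k) * qq Ψ Φ (false, t) (false, j) (false, k) +
      qq Ψ Φ (true, t) (false, j) (false, k) * qq Ψ Φ (false, t) (true, j) (true, k) +
      qq Ψ Φ (true, t) (true, j) (false, k) * qq Ψ Φ (false, t) (false, j) (true, k) +
      qq Ψ Φ (true, t) (false, j) (true, k) * qq Ψ Φ (false, t) (true, j) (false, k)) := by
      rw [← Finset.sum_add_distrib, Finset.mul_sum, Finset.mul_sum]
      refine Finset.sum_congr rfl fun t _ => ?_
      rcases lt_or_ge (t : ℕ) q with ht | ht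
      · rw [if_pos ht, if_neg (not_le.2 ht), add_zero, hG t ht]
      · rw [if_neg (not_lt.2 ht), if_pos ht, zero_add, hH t ht]
    rw [mTp j hj, mFp j hj, mTn k hk, mFn k hk, Core.ev3, Core.ev3 (false, k)] at h4
    have c1 : ∀ f : Sm n, D false (false, j) (D false (true, k) (D false (false, k) (D false (true, j) f)))
        = D false (true, j) (D false (false, j) (D false (true, k) (D false (false, k) f))) := by
      intro f
      rw [D_comm _ _ (false, k) (true, j), D_comm _ _ (true, k) (true, j),
        D_comm _ _ (false, j) (true, j)]
    rw [c1, c1] at h4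
    simp only [sT, sF] at h4
    have hl : ((lam j + lam k : ℝ) : ℂ) = (|lam j| : ℝ) - (|lam k| : ℝ) := by
      rw [abs_of_pos (hpos j hj), abs_of_neg (hneg k hk)]; push_cast; ring
    have hjk := hadd j k
    apply mul_left_cancel₀ (mul_ne_zero two_ne_zero hjk)
    rw [mul_add (2 * (((|lam j| : ℝ) : ℂ) + (|lam k| : ℝ))), hsum, Complex.ofReal_div, hl]
    push_cast
    have : ∀ Z : ℂ, 2 * (((|lam j| : ℝ) : ℂ) + (|lam k| : ℝ)) * (I * ((((|lam j| : ℝ) : ℂ) - (|lam k| : ℝ)) /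
      (((|lam j| : ℝ) : ℂ) + (|lam k| : ℝ))) * Z) = 2 * I * (((|lam j| : ℝ) : ℂ) - (|lam k| : ℝ)) * Z := by
      intro Z; field_simp
    rw [this]
    linear_combination (-I) * h4 + 2 * (((|lam j| : ℝ) : ℂ) + (|lam k| : ℝ)) *
      ev (D false (true, j) (D false (false, j) (D false (true, k) (D false (false, k) Ψ)))) * I_mul_I
  refine key _ _ ?_ ?_
  · intro t ht
    have v1 := h.qv (true, t) (true, j) (false, j) (2 * (|lam j| : ℝ)) 0
      (by simp only [mTn t ht, mTp j hj, mFp j hj, sT, sF]; ring) (mul_ne_zero two_ne_zero (hmuC j))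
      (by simp only [mTn t ht, mTp j hj, mFp j hj, sT, sF]; ring)
    have v2 := h.qv (true, t) (true, k) (false, k) (2 * (|lam k| : ℝ)) (4 * (|lam k| : ℝ))
      (by simp only [mTn t ht, mTn k hk, mFn k hk, sT, sF]; ring) (mul_ne_zero two_ne_zero (hmuC k))
      (by simp only [mTn t ht, mTn k hk, mFn k hk, sT, sF]; ring)
    have v2' := h.qv (false, t) (true, j) (false, j) (2 * ((|lam t| : ℝ) + (|lam j| : ℝ)))
      (4 * (|lam j| : ℝ))
      (by simp only [mFn t ht, mTp j hj, mFp j hj, sT, sF]; ring) (mul_ne_zero two_ne_zero (hadd t j))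
      (by simp only [mFn t ht, mTp j hj, mFp j hj, sT, sF]; ring)
    have v3 := h.qv (false, t) (false, j) (false, k) (2 * ((|lam t| : ℝ) + (|lam k| : ℝ))) 0
      (by simp only [mFn t ht, mFp j hj, mFn k hk, sT, sF]; ring) (mul_ne_zero two_ne_zero (hadd t k))
      (by simp only [mFn t ht, mFp j hj, mFn k hk, sT, sF]; ring)
    have v4 := h.qv (true, t) (false, j) (false, k) (2 * (|lam k| : ℝ)) (4 * (|lam k| : ℝ))
      (by simp only [mTn t ht, mFp j hj, mFn k hk, sT, sF]; ring) (mul_ne_zero two_ne_zero (hmuC k))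
      (by simp only [mTn t ht, mFp j hj, mFn k hk, sT, sF]; ring)
    have v4' := h.qv (false, t) (true, j) (true, k) (2 * ((|lam t| : ℝ) + (|lam j| : ℝ)))
      (4 * (|lam j| : ℝ))
      (by simp only [mFn t ht, mTp j hj, mTn k hk, sT, sF]; ring) (mul_ne_zero two_ne_zero (hadd t j))
      (by simp only [mFn t ht, mTp j hj, mTn k hk, sT, sF]; ring)
    have v5 := h.qv (false, t) (false, j) (true, k) (2 * (|lam t| : ℝ)) 0
      (by simp only [mFn t ht, mFp j hj, mTn k hk, sT, sF]; ring) (mul_ne_zero two_ne_zero (hmuC t))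
      (by simp only [mFn t ht, mFp j hj, mTn k hk, sT, sF]; ring)
    have v6 := h.qv (false, t) (true, j) (false, k)
      (2 * ((|lam t| : ℝ) + (|lam k| : ℝ) + (|lam j| : ℝ))) (4 * (|lam j| : ℝ))
      (by simp only [mFn t ht, mTp j hj, mFn k hk, sT, sF]; ring)
      (mul_ne_zero two_ne_zero (hadd3 t k j))
      (by simp only [mFn t ht, mTp j hj, mFn k hk, sT, sF]; ring)
    have v6' := h.kernel (true, t) (false, j) (true, k) 1 |lam t| |lam j| |lam k| (by norm_num)
      (by simp) (hmu t) (hmu j) (hmu k) rfl rfl rfl rfl rfl rfl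
      (by simp only [br, Bool.not_true, mFn t ht]; ring)
      (by simp only [br, Bool.not_false, mTp j hj]; ring)
      (by simp only [br, Bool.not_true, mFn k hk]; ring)
    have cj1 := h.ff_conj (false, t) (true, j) (true, k)
    have cj2 := h.ff_conj (false, t) (true, j) (false, k)
    simp only [br, Bool.not_true, Bool.not_false] at cj1 cj2
    rw [v1, v2, v2', v3, v4, v4', v5, v6, v6', cj1, cj2, ← Complex.mul_conj, ← Complex.mul_conj]
    have n1 := hmuC k
    have n6 := hmuC j
    have n7 := hmuC t
    have n2 := hadd t j
    have n3 := hadd j k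
    have n4 := hadd3 t k j
    have n5 : ((|lam t| : ℝ) : ℂ) + (|lam j| : ℝ) + (|lam k| : ℝ) ≠ 0 := hadd3 t j k
    push_cast
    rw [add_right_comm ((|lam t| : ℝ) : ℂ) (|lam j| : ℝ) (|lam k| : ℝ),
      add_comm ((|lam j| : ℝ) : ℂ) (|lam t| : ℝ)]
    field_simp
    ring
  · intro t ht
    have v1 := h.qv (true, t) (true, j) (false, j) (2 * ((|lam t| : ℝ) + (|lam j| : ℝ))) 0
      (by simp only [mTp t ht, mTp j hj, mFp j hj, sT, sF]; ring) (mul_ne_zero two_ne_zero (hadd t j))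
      (by simp only [mTp t ht, mTp j hj, mFp j hj, sT, sF]; ring)
    have v2 := h.qv (true, t) (true, k) (false, k) (2 * ((|lam t| : ℝ) + (|lam k| : ℝ)))
      (4 * (|lam k| : ℝ))
      (by simp only [mTp t ht, mTn k hk, mFn k hk, sT, sF]; ring) (mul_ne_zero two_ne_zero (hadd t k))
      (by simp only [mTp t ht, mTn k hk, mFn k hk, sT, sF]; ring)
    have v2' := h.qv (false, t) (true, j) (false, j) (2 * (|lam j| : ℝ)) (4 * (|lam j| : ℝ))
      (by simp only [mFp t ht, mTp j hj, mFp j hj, sT, sF]; ring) (mul_ne_zero two_ne_zero (hmuC j))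
      (by simp only [mFp t ht, mTp j hj, mFp j hj, sT, sF]; ring)
    have v3 := h.qv (true, t) (true, j) (true, k) (2 * ((|lam t| : ℝ) + (|lam j| : ℝ))) 0
      (by simp only [mTp t ht, mTp j hj, mTn k hk, sT, sF]; ring) (mul_ne_zero two_ne_zero (hadd t j))
      (by simp only [mTp t ht, mTp j hj, mTn k hk, sT, sF]; ring)
    have v4 := h.qv (true, t) (false, j) (false, k) (2 * ((|lam t| : ℝ) + (|lam k| : ℝ)))
      (4 * (|lam k| : ℝ))
      (by simp only [mTp t ht, mFp j hj, mFn k hk, sT, sF]; ring) (mul_ne_zero two_ne_zero (hadd t k))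
      (by simp only [mTp t ht, mFp j hj, mFn k hk, sT, sF]; ring)
    have v4' := h.qv (false, t) (true, j) (true, k) (2 * (|lam j| : ℝ)) (4 * (|lam j| : ℝ))
      (by simp only [mFp t ht, mTp j hj, mTn k hk, sT, sF]; ring) (mul_ne_zero two_ne_zero (hmuC j))
      (by simp only [mFp t ht, mTp j hj, mTn k hk, sT, sF]; ring)
    have v5 := h.qv (true, t) (false, j) (true, k) (2 * (|lam t| : ℝ)) 0
      (by simp only [mTp t ht, mFp j hj, mTn k hk, sT, sF]; ring) (mul_ne_zero two_ne_zero (hmuC t))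
      (by simp only [mTp t ht, mFp j hj, mTn k hk, sT, sF]; ring)
    have v6 := h.qv (true, t) (true, j) (false, k)
      (2 * ((|lam t| : ℝ) + (|lam k| : ℝ) + (|lam j| : ℝ))) (4 * (|lam k| : ℝ))
      (by simp only [mTp t ht, mTp j hj, mFn k hk, sT, sF]; ring)
      (mul_ne_zero two_ne_zero (hadd3 t k j))
      (by simp only [mTp t ht, mTp j hj, mFn k hk, sT, sF]; ring)
    have v6' := h.kernel (false, t) (true, k) (false, j) (-1) |lam t| |lam k| |lam j| (by norm_num)
      (by simp) (hmu t) (hmu k) (hmu j) rfl (by simp [sg]) rfl (by simp [sg, br]) rfl (by simp [sg, br])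
      (by simp only [br, Bool.not_false, mTp t ht]; ring)
      (by simp only [br, Bool.not_true, mFn k hk]; ring)
      (by simp only [br, Bool.not_false, mTp j hj]; ring)
    rw [qq_swap, ee_swap23] at v6'
    have cj1 := h.ff_conj (false, t) (true, j) (true, k)
    have cj2 := h.ff_conj (false, t) (false, j) (true, k)
    simp only [br, Bool.not_true, Bool.not_false] at cj1 cj2
    rw [v1, v2, v2', v3, v4, v4', v5, v6, v6', cj1, cj2, ← Complex.mul_conj, ← Complex.mul_conj]
    have n1 := hmuC j
    have n2 := hadd t k
    have n3 := hadd j k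
    have n4 := hadd3 t k j
    push_cast
    rw [add_comm ((|lam k| : ℝ) : ℂ) (|lam t| : ℝ), add_comm ((|lam k| : ℝ) : ℂ) (|lam j| : ℝ)]
    field_simp
    ring

/-- the mixed fourth derivative `∂⁴ψ/∂z̄_j∂z_j∂z̄_k∂z_k(0,0)`
(derivatives in the `z`-variables, `w` held fixed at `0`) for `q+1 ≤ j ≤ n`,
`1 ≤ k ≤ q`. -/
theorem statement7 (n q : ℕ) (hn : 1 ≤ n) (hq : q ≤ n) (lam : Fin n → ℝ)
    (hneg : ∀ j : Fin n, (j : ℕ) < q → lam j < 0)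
    (hpos : ∀ j : Fin n, q ≤ (j : ℕ) → 0 < lam j)
    (φ : Cn n → ℝ) (hφ : PhiOK lam φ)
    (ψ : Cn n → Cn n → ℂ) (hψ : Admissible lam φ ψ)
    (j k : Fin n) (hj : q ≤ (j : ℕ)) (hk : (k : ℕ) < q) :
    wdb j (wd j (wdb k (wd k (fun z => ψ z 0)))) 0 =
      (∑ t : Fin n, if (t : ℕ) < q then
        ((2 * |lam j| / ((|lam j| + |lam k|) * (|lam t| + |lam j|)) : ℝ) : ℂ) * Complex.I *
            (Complex.normSq (wdb t (wd j (wd k (cplx φ))) 0) : ℂ)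
        + ((2 * |lam t| * |lam k| * |lam j| /
              ((|lam j| + |lam k|) * (|lam t| + |lam k| + |lam j|) ^ 2) *
              (1 / (|lam j| + |lam t|) + 1 / (|lam j| + |lam k|)) : ℝ) : ℂ) * Complex.I *
            (Complex.normSq (wdb t (wd j (wdb k (cplx φ))) 0) : ℂ)
        + ((2 * |lam j| / ((|lam j| + |lam t|) * (|lam j| + |lam k|)) : ℝ) : ℂ) * Complex.I *
            (wd t (wdb j (wd j (cplx φ))) 0 * wdb t (wdb k (wd k (cplx φ))) 0)
      else 0)
      + (∑ t : Fin n, if q ≤ (t : ℕ) then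
        ((2 * |lam k| / ((|lam j| + |lam k|) * (|lam t| + |lam k|)) : ℝ) : ℂ) * Complex.I *
            (Complex.normSq (wdb t (wd j (wd k (cplx φ))) 0) : ℂ)
        + ((2 * |lam t| * |lam k| * |lam j| /
              ((|lam j| + |lam k|) * (|lam t| + |lam k| + |lam j|) ^ 2) *
              (1 / (|lam j| + |lam k|) + 1 / (|lam t| + |lam k|)) : ℝ) : ℂ) * Complex.I *
            (Complex.normSq (wdb t (wdb j (wd k (cplx φ))) 0) : ℂ)
        + ((2 * |lam k| / ((|lam k| + |lam t|) * (|lam j| + |lam k|)) : ℝ) : ℂ) * Complex.I *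
            (wd t (wdb j (wd j (cplx φ))) 0 * wdb t (wdb k (wd k (cplx φ))) 0)
      else 0)
      + Complex.I * (((lam j + lam k) / (|lam j| + |lam k|) : ℝ) : ℂ) *
          wdb j (wd j (wdb k (wd k (cplx φ)))) 0 := by
  have hC := core_of lam φ hφ ψ hψ
  have hm := statement7_core hneg hpos hC j k hj hk
  have hΨ : wdb j (wd j (wdb k (wd k (fun z => ψ z 0)))) 0 = ev (D false (true, j)
      (D false (false, j) (D false (true, k) (D false (false, k) (mkPsi ψ hψ.1))))) := by
    change W (true, j) (W (false, j) (W (true, k) (W (false, k)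
      (fun z => (mkPsi ψ hψ.1 : Cn n × Cn n → ℂ) (z, 0))))) 0 = _
    rw [W_z, W_z, W_z, W_z]; rfl
  have hΦ : wdb j (wd j (wdb k (wd k (cplx φ)))) 0 = ev (D false (true, j)
      (D false (false, j) (D false (true, k) (D false (false, k) (mkPhi φ hφ.1))))) := by
    change W (true, j) (W (false, j) (W (true, k) (W (false, k)
      (fun z => (mkPhi φ hφ.1 : Cn n × Cn n → ℂ) (z, 0))))) 0 = _
    rw [W_z, W_z, W_z, W_z]; rfl
  have h3 : ∀ x y y' : Bool × Fin n, ee (mkPhi φ hφ.1) false false false x y y' =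
      W x (W y (W y' (cplx φ))) 0 := by
    intro x y y'
    change _ = W x (W y (W y' (fun z => (mkPhi φ hφ.1 : Cn n × Cn n → ℂ) (z, 0)))) 0
    rw [W_z, W_z, W_z]; rfl
  rw [hΨ, hΦ, hm]
  simp only [h3]
  rfl
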